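/- Let n be a positive integer with n ≡ 0 (mod 4), let τ, A, A_C be integers, and set Q = ((-1)^{n/4}·B_{n/2} − B_{n/4})/(B_{n/2}·B_{n/4}) ∈ ℚ. If the equation A_C = 2n·(1 + 1/B_{n/2} + ((2^{n-1}−1)/(2^{n/2}−1)^2)·Q)·A + (1/(2^{n/2}−1)^2)·Q·(n·τ/2^n) holds in ℚ, then A_C is even if and only if the rational number Q·(n·τ/2^n) is congruent to 0 modulo 2 as a 2-adic integer, i.e., if and only if (1/2)·Q·(n·τ/2^n) has odd denominator in lowest terms. -/

import Mathlib

/-- The topologists' Bernoulli number `B_k`: the absolute value of the `(2k)`-th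
Bernoulli number, so `topB 1 = 1/6`, `topB 2 = 1/30`, etc. -/
def topB (k : ℕ) : ℚ := |bernoulli (2 * k)|

/-!
By von Staudt–Clausen, `B_{2k} + 1/2` is a 2-adic integer for `k ≠ 0`, so the inverses of the
numbers `topB k`, and hence `Q`, are 2-adic integers. As `2^(n/2) - 1` is a 2-adic unit, the
hypothesis reads `A_C = 2 t + w q` with `t` a 2-adic integer, `w` a 2-adic unit and
`q = Q n τ / 2^n`; dividing by two, `A_C / 2` is a 2-adic integer exactly when `q / 2` is.
-/

section Padic

variable {p : ℕ} [Fact p.Prime]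

lemma padicValuation_one_div_prime_le_one {q : ℕ} (hq : q.Prime) (hqp : q ≠ p) :
    Rat.padicValuation p (1 / q) ≤ 1 := by
  rw [Rat.padicValuation_le_one_iff, one_div, Rat.inv_natCast_den_of_pos hq.pos,
    Nat.prime_dvd_prime_iff_eq Fact.out hq]
  exact hqp.symm

lemma padicValuation_one_div_self : Rat.padicValuation p (1 / p) = WithZero.exp 1 := by
  rw [map_div₀, map_one, Rat.padicValuation_self, one_div, ← WithZero.exp_neg, neg_neg]

lemma one_lt_padicValuation_one_div_self : 1 < Rat.padicValuation p (1 / p) := by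
  rw [padicValuation_one_div_self, ← WithZero.exp_zero]
  exact WithZero.exp_lt_exp.mpr one_pos

lemma padicValuation_self_lt_one : Rat.padicValuation p p < 1 := by
  rw [Rat.padicValuation_self, ← WithZero.exp_zero]
  exact WithZero.exp_lt_exp.mpr (by norm_num)

lemma padicValuation_pow_sub_one {m : ℕ} (hm : m ≠ 0) : Rat.padicValuation p (p ^ m - 1) = 1 := by
  rw [Valuation.map_sub_swap]
  apply Valuation.map_one_sub_of_lt
  rw [map_pow]
  exact pow_lt_one₀ zero_le padicValuation_self_lt_one hm

lemma padicValuation_intCast_div_self_le_one_iff {a : ℤ} :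
    Rat.padicValuation p (a / p) ≤ 1 ↔ (p : ℤ) ∣ a := by
  have hp : (p : ℚ) ≠ 0 := NeZero.ne _
  constructor
  · intro h
    rw [← Int.padicValuation_lt_one_iff, ← Rat.padicValuation_cast]
    calc Rat.padicValuation p a = Rat.padicValuation p p * Rat.padicValuation p (a / p) := by
          rw [← map_mul, mul_div_cancel₀ _ hp]
      _ ≤ Rat.padicValuation p p := mul_le_of_le_one_right' h
      _ < 1 := padicValuation_self_lt_one
  · rintro ⟨b, rfl⟩
    rw [Int.cast_mul, Int.cast_natCast, mul_div_cancel_left₀ _ hp]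
    exact Int.padicValuation_le_one p b

lemma dvd_iff_padicValuation_div_le_one_of_eq_mul_add_mul {a : ℤ} {t w q : ℚ}
    (ht : Rat.padicValuation p t ≤ 1) (hw : Rat.padicValuation p w = 1) (ha : a = p * t + w * q) :
    (p : ℤ) ∣ a ↔ Rat.padicValuation p (q / p) ≤ 1 := by
  have hp : (p : ℚ) ≠ 0 := NeZero.ne _
  have hdiv : (a / p : ℚ) = t + w * (q / p) := by
    rw [ha]
    field_simp
  calc (p : ℤ) ∣ a ↔ t + w * (q / p) ∈ (Rat.padicValuation p).valuationSubring := by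
        rw [← padicValuation_intCast_div_self_le_one_iff, hdiv, Valuation.mem_valuationSubring_iff]
    _ ↔ w * (q / p) ∈ (Rat.padicValuation p).valuationSubring := add_mem_cancel_left ht
    _ ↔ Rat.padicValuation p (q / p) ≤ 1 := by
        rw [Valuation.mem_valuationSubring_iff, map_mul, hw, one_mul]

end Padic

section Bernoulli

variable {p : ℕ} [Fact p.Prime] {k : ℕ}

lemma padicValuation_bernoulli_add_one_div_le_one (hk : k ≠ 0) (hpk : (p - 1) ∣ 2 * k) :
    Rat.padicValuation p (bernoulli (2 * k) + 1 / p) ≤ 1 := by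
  obtain ⟨m, hm⟩ := Bernoulli.vonStaudt_clausen k
  have hp : p.Prime := Fact.out
  have hple : p - 1 ≤ 2 * k := Nat.le_of_dvd (by positivity) hpk
  rw [← Finset.add_sum_erase _ _ (Finset.mem_filter.mpr
    ⟨Finset.mem_range.mpr (by omega : p < 2 * k + 2), hp, hpk⟩), ← add_assoc] at hm
  rw [eq_sub_of_add_eq hm.symm]
  refine Valuation.map_sub_le _ (Int.padicValuation_le_one p m)
    (Valuation.map_sum_le _ fun q hq ↦ ?_)
  simp only [Finset.mem_erase, Finset.mem_filter] at hq
  exact padicValuation_one_div_prime_le_one hq.2.2.1 hq.1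

lemma padicValuation_bernoulli (hk : k ≠ 0) (hpk : (p - 1) ∣ 2 * k) :
    Rat.padicValuation p (bernoulli (2 * k)) = WithZero.exp 1 := by
  have hlt : Rat.padicValuation p (bernoulli (2 * k) + 1 / p) < Rat.padicValuation p (1 / p) :=
    (padicValuation_bernoulli_add_one_div_le_one hk hpk).trans_lt one_lt_padicValuation_one_div_self
  calc Rat.padicValuation p (bernoulli (2 * k))
      = Rat.padicValuation p (bernoulli (2 * k) + 1 / p - 1 / p) := by rw [add_sub_cancel_right]
    _ = Rat.padicValuation p (1 / p) := Valuation.map_sub_eq_of_lt_right _ hlt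
    _ = WithZero.exp 1 := padicValuation_one_div_self

lemma one_le_padicValuation_bernoulli (hpk : (p - 1) ∣ 2 * k) :
    1 ≤ Rat.padicValuation p (bernoulli (2 * k)) := by
  rcases eq_or_ne k 0 with rfl | hk
  · simp
  · rw [padicValuation_bernoulli hk hpk, ← padicValuation_one_div_self (p := p)]
    exact one_lt_padicValuation_one_div_self.le

lemma one_le_padicValuation_topB (hpk : (p - 1) ∣ 2 * k) : 1 ≤ Rat.padicValuation p (topB k) := by
  have hB := one_le_padicValuation_bernoulli hpk
  rcases abs_choice (bernoulli (2 * k)) with h | h <;> simpa only [topB, h, Valuation.map_neg]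

lemma inv_topB_mem_valuationSubring (hpk : (p - 1) ∣ 2 * k) :
    (topB k)⁻¹ ∈ (Rat.padicValuation p).valuationSubring := by
  rw [Valuation.mem_valuationSubring_iff, map_inv₀]
  exact inv_le_one_of_one_le₀ (one_le_padicValuation_topB hpk)

lemma topB_ne_zero (k : ℕ) : topB k ≠ 0 :=
  (Valuation.pos_iff _).mp (zero_lt_one.trans_le (one_le_padicValuation_topB (p := 2) (one_dvd _)))

lemma mul_topB_sub_topB_div_mem_valuationSubring {l : ℕ} (hpk : (p - 1) ∣ 2 * k)
    (hpl : (p - 1) ∣ 2 * l) (s : ℤ) :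
    (s * topB l - topB k) / (topB l * topB k) ∈ (Rat.padicValuation p).valuationSubring := by
  have hk := topB_ne_zero k
  have hl := topB_ne_zero l
  have hsplit : (s * topB l - topB k) / (topB l * topB k) = s * (topB k)⁻¹ - (topB l)⁻¹ := by
    field_simp
  rw [hsplit]
  exact sub_mem (mul_mem (intCast_mem _ s) (inv_topB_mem_valuationSubring hpk))
    (inv_topB_mem_valuationSubring hpl)

end Bernoulli

lemma odd_den_iff_padicValuation_two_le_one {x : ℚ} : Odd x.den ↔ Rat.padicValuation 2 x ≤ 1 := by
  rw [Rat.padicValuation_le_one_iff, ← even_iff_two_dvd, Nat.not_even_iff_odd]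

theorem even_iff_two_adic_zero_mod_two_general {n k l : ℕ} (hl : l ≠ 0) {A : ℚ} (hA : Odd A.den)
    (τ : ℚ) (s A_C : ℤ) (Q : ℚ) (hQ : Q = (s * topB l - topB k) / (topB l * topB k))
    (heq : (A_C : ℚ) =
      2 * n * (1 + 1 / topB l + ((2 ^ (n - 1) - 1) / (2 ^ l - 1) ^ 2) * Q) * A
        + (1 / (2 ^ l - 1) ^ 2) * Q * (n * τ / 2 ^ n)) :
    Even A_C ↔ Odd ((1 / 2 : ℚ) * Q * (n * τ / 2 ^ n)).den := by
  let O := (Rat.padicValuation 2).valuationSubring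
  have hQO : Q ∈ O :=
    hQ ▸ mul_topB_sub_topB_div_mem_valuationSubring (one_dvd _) (one_dvd _) s
  have hAO : A ∈ O := odd_den_iff_padicValuation_two_le_one.mp hA
  have hw : Rat.padicValuation 2 (1 / (2 ^ l - 1) ^ 2) = 1 := by
    have hu : Rat.padicValuation 2 (2 ^ l - 1) = 1 := padicValuation_pow_sub_one hl
    simp [hu]
  have hc : (2 ^ (n - 1) - 1 : ℚ) / (2 ^ l - 1) ^ 2 ∈ O := by
    rw [div_eq_mul_one_div]
    exact mul_mem (sub_mem (pow_mem (ofNat_mem O 2) _) (one_mem O)) hw.le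
  have hB : 1 / topB l ∈ O := one_div (topB l) ▸ inv_topB_mem_valuationSubring (one_dvd _)
  have ht : n * (1 + 1 / topB l + ((2 ^ (n - 1) - 1) / (2 ^ l - 1) ^ 2) * Q) * A ∈ O :=
    mul_mem (mul_mem (natCast_mem O n) (add_mem (add_mem (one_mem O) hB) (mul_mem hc hQO))) hAO
  have hhalf : (1 / 2 : ℚ) * Q * (n * τ / 2 ^ n) = Q * (n * τ / 2 ^ n) / (2 : ℕ) := by
    push_cast
    ring
  rw [even_iff_two_dvd, odd_den_iff_padicValuation_two_le_one, hhalf]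
  refine dvd_iff_padicValuation_div_le_one_of_eq_mul_add_mul ht hw ?_
  rw [heq]
  push_cast
  ring

/-- Let `n ≡ 0 (mod 4)` be positive and `τ, A, A_C` integers.  Set
`Q = ((-1)^(n/4) B_{n/2} - B_{n/4}) / (B_{n/2} B_{n/4})`.  If
`A_C = 2n (1 + 1/B_{n/2} + ((2^(n-1)-1)/(2^(n/2)-1)^2) Q) A
      + (1/(2^(n/2)-1)^2) Q (n τ / 2^n)`
holds in `ℚ`, then `A_C` is even if and only if `Q * (n τ / 2^n)` is congruent to
`0` modulo `2` as a 2-adic integer, i.e. iff `(1/2) * Q * (n τ / 2^n)` has odd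
denominator in lowest terms. -/
theorem even_iff_two_adic_zero_mod_two (n : ℕ) (hn : 0 < n) (h4 : n % 4 = 0)
    (τ A A_C : ℤ)
    (Q : ℚ)
    (hQ : Q = ((-1 : ℚ) ^ (n / 4) * topB (n / 2) - topB (n / 4)) /
      (topB (n / 2) * topB (n / 4)))
    (heq : (A_C : ℚ) =
      2 * n * (1 + 1 / topB (n / 2)
          + ((2 ^ (n - 1) - 1) / (2 ^ (n / 2) - 1) ^ 2) * Q) * A
        + (1 / (2 ^ (n / 2) - 1) ^ 2) * Q * (n * τ / 2 ^ n)) :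
    Even A_C ↔ Odd ((1 / 2 : ℚ) * Q * (n * τ / 2 ^ n)).den := by
  exact even_iff_two_adic_zero_mod_two_general (by omega) (by simp) τ ((-1) ^ (n / 4)) A_C Q
    (by simpa using hQ) heq
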